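/- arXiv:1509.05353 — 3 statements merged into one kernel-verified Lean document; each statement's English description precedes it below -/
import Mathlib

section
/- Let A ∈ 𝓡 and let F be a probability distribution supported by [0,∞)^d with F ∈ 𝓢_A. Then for every a ∈ ℝ^d, lim_{u→∞} F(uA + a)/F(uA) = 1, where uA + a := {u x + a : x ∈ A}. -/
/-!
The set `C = Aᶜ` is convex and contains a ball around the origin, so it contains `K⁻¹ • a` and
`-K⁻¹ • a` for large `K`. Since `v • C + K • C ⊆ (v + K) • C`, this gives the sandwich
`(u + K) • A ⊆ u • A + a ⊆ (u - K) • A` (`ruin_smul_subset`). Hence `F (uA + a) / F (uA)` lies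
between `T (u + K) / T u` and `T (u - K) / T u`, where `T` is the tail of the subexponential law
attached to `F` and `A`, and both bounds tend to `1` because subexponential laws are long-tailed
(`tendsto_mtail_sub_div`).
-/

open MeasureTheory ProbabilityTheory Filter Set Pointwise

/-- Tail of a measure on `ℝ`. -/
noncomputable def mtail (ν : Measure ℝ) (t : ℝ) : ℝ := (ν (Set.Ioi t)).toReal

/-- A distribution on `[0,∞)` is subexponential: all tails are positive and, for independent
`Y₁, Y₂` with this distribution, `P(Y₁ + Y₂ > t)/P(Y₁ > t) → 2`. -/
def IsSubexpMeasure (ν : Measure ℝ) : Prop :=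
  (∀ t : ℝ, 0 < mtail ν t) ∧
  Tendsto (fun t => mtail (Measure.map (fun p : ℝ × ℝ => p.1 + p.2) (ν.prod ν)) t / mtail ν t)
    atTop (nhds 2)

/-- The family 𝓡 of ruin regions: open, increasing sets with convex complement whose closure
misses the origin. -/
def IsRuinRegion {d : ℕ} (A : Set (Fin d → ℝ)) : Prop :=
  IsOpen A ∧ (∀ x ∈ A, ∀ a : Fin d → ℝ, (∀ i, 0 ≤ a i) → x + a ∈ A) ∧
  Convex ℝ Aᶜ ∧ (0 : Fin d → ℝ) ∉ closure A

/-- `F ∈ 𝓢_A`: the function `t ↦ 1 − F(tA)` for `t > 0` extends to a subexponential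
distribution function on `[0,∞)`. -/
def MemS {d : ℕ} (F : Measure (Fin d → ℝ)) (A : Set (Fin d → ℝ)) : Prop :=
  ∃ ν : Measure ℝ, IsProbabilityMeasure ν ∧ ν (Set.Iio 0) = 0 ∧
    (∀ t : ℝ, 0 < t → ν (Set.Ioi t) = F (t • A)) ∧ IsSubexpMeasure ν

/-- Splitting `{Y₁ + Y₂ > t}` according to `Y₂ > t`, `Y₂ ≤ K` or `K < Y₂ ≤ t`. -/
lemma mtail_conv_lower (ν : Measure ℝ) [IsProbabilityMeasure ν] (hν : ν (Set.Iio 0) = 0)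
    {K t : ℝ} (hK : 0 ≤ K) (ht : K ≤ t) :
    mtail ν t * (2 - mtail ν K) + mtail ν (t - K) * (mtail ν K - mtail ν t)
      ≤ mtail (Measure.map (fun p : ℝ × ℝ => p.1 + p.2) (ν.prod ν)) t := by
  have hm : Measurable (fun p : ℝ × ℝ => p.1 + p.2) := by fun_prop
  have hIci : ν.real (Set.Ici 0) = 1 := by
    rw [← Set.compl_Iio, probReal_compl_eq_one_sub measurableSet_Iio, measureReal_def, hν]
    simp
  have hIcc : ν.real (Set.Icc 0 K) = 1 - ν.real (Set.Ioi K) := by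
    have h : Set.Icc 0 K = Set.Ici 0 \ Set.Ioi K := by ext x; simp
    rw [h, measureReal_sdiff _ measurableSet_Ioi, hIci]
    intro x hx
    exact hK.trans (le_of_lt hx)
  have hIoc : ν.real (Set.Ioc K t) = ν.real (Set.Ioi K) - ν.real (Set.Ioi t) := by
    have h : Set.Ioc K t = Set.Ioi K \ Set.Ioi t := by ext x; simp
    rw [h, measureReal_sdiff (Set.Ioi_subset_Ioi ht) measurableSet_Ioi]
  have key : (ν.prod ν).real (Set.Ici 0 ×ˢ Set.Ioi t ∪
      (Set.Ioi t ×ˢ Set.Icc 0 K ∪ Set.Ioi (t - K) ×ˢ Set.Ioc K t))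
      = mtail ν t * (2 - mtail ν K) + mtail ν (t - K) * (mtail ν K - mtail ν t) := by
    rw [measureReal_union, measureReal_union, measureReal_prod_prod, measureReal_prod_prod,
      measureReal_prod_prod, hIci, hIcc, hIoc]
    · simp only [mtail, measureReal_def]
      ring
    · rw [Set.disjoint_left]
      rintro ⟨x, y⟩ h1 h2
      simp only [Set.mem_prod, Set.mem_Icc, Set.mem_Ioc] at h1 h2
      linarith [h1.2.2, h2.2.1]
    · exact measurableSet_Ioi.prod measurableSet_Ioc
    · rw [Set.disjoint_left]
      rintro ⟨x, y⟩ h1 h2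
      simp only [Set.mem_union, Set.mem_prod, Set.mem_Icc, Set.mem_Ioc, Set.mem_Ioi] at h1 h2
      rcases h2 with h2 | h2
      · linarith [h1.2, h2.2.2]
      · linarith [h1.2, h2.2.2]
    · exact (measurableSet_Ioi.prod measurableSet_Icc).union
        (measurableSet_Ioi.prod measurableSet_Ioc)
  rw [← key]
  unfold mtail
  rw [Measure.map_apply hm measurableSet_Ioi]
  refine measureReal_mono (μ := ν.prod ν) ?_
  rintro ⟨x, y⟩ h
  simp only [Set.mem_union, Set.mem_prod, Set.mem_Icc, Set.mem_Ioc, Set.mem_Ioi, Set.mem_Ici,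
    Set.mem_preimage] at h ⊢
  rcases h with h | h | h
  · linarith [h.1, h.2]
  · linarith [h.1, h.2.1]
  · linarith [h.1, h.2.1]

lemma mtail_antitone (ν : Measure ℝ) [IsProbabilityMeasure ν] : Antitone (mtail ν) :=
  fun _ _ h => measureReal_mono (μ := ν) (Set.Ioi_subset_Ioi h)

lemma tendsto_mtail_atTop (ν : Measure ℝ) [IsProbabilityMeasure ν] :
    Tendsto (mtail ν) atTop (nhds 0) := by
  have h : mtail ν = fun t => 1 - cdf ν t := by
    ext t
    rw [cdf_eq_real, ← probReal_compl_eq_one_sub measurableSet_Iic, Set.compl_Iic]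
    rfl
  rw [h]
  simpa using (tendsto_cdf_atTop ν).const_sub 1

/-- A subexponential law is long-tailed. -/
lemma tendsto_mtail_sub_div (ν : Measure ℝ) [IsProbabilityMeasure ν] (hν : ν (Set.Iio 0) = 0)
    (hs : IsSubexpMeasure ν) {K : ℝ} (hK : 0 ≤ K) :
    Tendsto (fun t => mtail ν (t - K) / mtail ν t) atTop (nhds 1) := by
  obtain ⟨hpos, hlim⟩ := hs
  have hT := tendsto_mtail_atTop ν
  have hup : Tendsto (fun t =>
      (mtail (Measure.map (fun p : ℝ × ℝ => p.1 + p.2) (ν.prod ν)) t / mtail ν t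
        - 2 + mtail ν K) / (mtail ν K - mtail ν t)) atTop (nhds 1) := by
    have h := ((hlim.sub_const 2).add_const (mtail ν K)).div (hT.const_sub (mtail ν K))
      (by simpa using (hpos K).ne')
    simpa [Pi.div_def, div_self (hpos K).ne'] using h
  refine tendsto_of_tendsto_of_tendsto_of_le_of_le' tendsto_const_nhds hup ?_ ?_
  · filter_upwards with t
    rw [le_div_iff₀ (hpos t), one_mul]
    exact mtail_antitone ν (by linarith)
  · filter_upwards [eventually_ge_atTop K, hT.eventually_lt_const (hpos K)] with t ht hlt
    have h := mtail_conv_lower ν hν hK ht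
    have hp := hpos t
    rw [le_div_iff₀ (sub_pos.2 hlt)]
    have h2 := div_le_div_of_nonneg_right h hp.le
    have h3 : (mtail ν t * (2 - mtail ν K) + mtail ν (t - K) * (mtail ν K - mtail ν t)) / mtail ν t
        = 2 - mtail ν K + mtail ν (t - K) / mtail ν t * (mtail ν K - mtail ν t) := by
      field_simp
    linarith

/-- If the convex complement of `A` contains `K⁻¹ • a`, then `(v + K) • A ⊆ v • A + a`. -/
lemma ruin_smul_subset {d : ℕ} {A : Set (Fin d → ℝ)} (hC : Convex ℝ Aᶜ) {a : Fin d → ℝ}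
    {K v : ℝ} (hK : 0 < K) (hv : 0 < v) (ha : K⁻¹ • a ∉ A) :
    (v + K) • A ⊆ (fun x => x + a) '' (v • A) := by
  rintro _ ⟨x, hx, rfl⟩
  refine ⟨(v + K) • x - a, ?_, by simp⟩
  rw [Set.mem_smul_set_iff_inv_smul_mem₀ hv.ne']
  by_contra hn
  have hvK : v + K ≠ 0 := by positivity
  have h := hC hn ha (a := v / (v + K)) (b := K / (v + K)) (by positivity) (by positivity)
    (by field_simp)
  refine h ?_
  convert hx using 1
  ext i
  simp only [Pi.add_apply, Pi.smul_apply, Pi.sub_apply, smul_eq_mul]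
  field_simp
  ring

/-- If `F ∈ 𝓢_A`, then for every `a ∈ ℝ^d`, `F(uA + a)/F(uA) → 1` as `u → ∞`, where
`uA + a = {u x + a : x ∈ A}`. -/
theorem memS_translate_insensitive
    {d : ℕ} {A : Set (Fin d → ℝ)} (hA : IsRuinRegion A)
    (F : Measure (Fin d → ℝ)) [IsProbabilityMeasure F]
    (hsupp : F {x : Fin d → ℝ | ∀ i, 0 ≤ x i}ᶜ = 0)
    (hFA : MemS F A) :
    ∀ a : Fin d → ℝ,
      Tendsto (fun u : ℝ => (F ((fun x => x + a) '' (u • A))).toReal / (F (u • A)).toReal)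
        atTop (nhds 1) := by
  intro a
  obtain ⟨-, -, hC, h0⟩ := hA
  obtain ⟨ν, hνp, hν0, hνF, hs⟩ := hFA
  -- For large `K` both `K⁻¹ • a` and `K⁻¹ • (-a)` are near the origin, hence outside `A`.
  have hout : ∀ b : Fin d → ℝ, ∀ᶠ K : ℝ in atTop, K⁻¹ • b ∉ A := by
    intro b
    have h1 : Tendsto (fun K : ℝ => K⁻¹ • b) atTop (nhds 0) := by
      simpa using (tendsto_inv_atTop_zero (𝕜 := ℝ)).smul_const b
    have h2 : (closure A)ᶜ ∈ nhds (0 : Fin d → ℝ) := isClosed_closure.isOpen_compl.mem_nhds h0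
    filter_upwards [h1.eventually h2] with K hK hKA
    exact hK (subset_closure hKA)
  obtain ⟨K, ha, hna, hK⟩ := ((hout a).and ((hout (-a)).and (eventually_gt_atTop 0))).exists
  have hF : ∀ t : ℝ, 0 < t → (F (t • A)).toReal = mtail ν t := by
    intro t ht
    rw [← hνF t ht]
    rfl
  have hup := tendsto_mtail_sub_div ν hν0 hs hK.le
  have hlow : Tendsto (fun u => mtail ν (u + K) / mtail ν u) atTop (nhds 1) := by
    have h := (hup.comp (tendsto_atTop_add_const_right atTop K tendsto_id)).inv₀ one_ne_zero
    simpa [Function.comp_def] using h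
  refine tendsto_of_tendsto_of_tendsto_of_le_of_le' hlow hup ?_ ?_
  · filter_upwards [eventually_gt_atTop 0] with u hu
    rw [hF u hu, ← hF (u + K) (by positivity)]
    exact div_le_div_of_nonneg_right
      (measureReal_mono (μ := F) (ruin_smul_subset hC hK hu ha)) (hs.1 u).le
  · filter_upwards [eventually_gt_atTop K] with u hu
    rw [hF u (hK.trans hu), ← hF (u - K) (by linarith)]
    refine div_le_div_of_nonneg_right (measureReal_mono (μ := F) ?_) (hs.1 u).le
    rintro _ ⟨y, hy, rfl⟩
    have h := ruin_smul_subset hC hK (sub_pos.2 hu) hna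
    rw [sub_add_cancel] at h
    obtain ⟨z, hz, rfl⟩ := h hy
    simpa using hz
end

section
/- Let A ∈ 𝓡 and let F be a probability distribution supported by [0,∞)^d with F ∈ 𝓢_A. Let X, X^(1), X^(2), … be i.i.d. random vectors with law F. Then for every ε > 0 there exists K > 0 such that for all u > 0 and all n ≥ 1, P(X^(1) + … + X^(n) ∈ uA) ≤ K (1 + ε)^n P(X ∈ uA). -/
/-!
The gauge `g` of `Aᶜ` turns the problem into a one-dimensional one.  As `Aᶜ` is closed, convex and
a neighbourhood of `0`, the gauge is continuous, subadditive, and `x ∈ u • A ↔ u < g x` for `u > 0`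
(`mem_smul_iff_lt_gauge`).  Hence the subexponential law in `MemS` is the law of `g(X)`
(`eq_map_of_tails`), and `X⁽¹⁾ + ⋯ + X⁽ⁿ⁾ ∈ uA` forces `g(X⁽¹⁾) + ⋯ + g(X⁽ⁿ⁾) > u`.

The rest is Kesten's induction.  Write `p u = P(g(X) > u)`.  Splitting according to whether the last
summand exceeds `u`, a bound `P(g(Sₙ) > u) ≤ a p(u)` for all `u ≥ 0` gives
`P(g(Sₙ₊₁) > u) ≤ a ∫_{g ≤ u} p(u - g) dF + p(u)`.  Subexponentiality bounds the integral by
`(1 + ε) p(u)` for `u ≥ T`, while for `u < T` the trivial bound `1 ≤ p(u) / p(T)` is used.  So the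
constants may be taken to satisfy `aₙ₊₁ = C + (1 + ε) aₙ` with `C = 1 + 1 / p(T)` and `a₀ = 0`,
that is, `aₙ = (C / ε) ((1 + ε)ⁿ - 1)`.
-/

open MeasureTheory ProbabilityTheory Filter Set Pointwise

/-- `n`-fold convolution power of a distribution on `ℝ^d` (law of the sum of `n` i.i.d.
copies). -/
noncomputable def convPow {d : ℕ} (F : Measure (Fin d → ℝ)) : ℕ → Measure (Fin d → ℝ)
  | 0 => Measure.dirac 0
  | n + 1 => Measure.map (fun p => p.1 + p.2) ((convPow F n).prod F)

instance convPow_isProbabilityMeasure {d : ℕ} (F : Measure (Fin d → ℝ)) [IsProbabilityMeasure F]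
    (n : ℕ) :
    IsProbabilityMeasure (convPow F n) := by
  induction n with
  | zero => unfold convPow; infer_instance
  | succ n ih =>
    unfold convPow
    exact Measure.isProbabilityMeasure_map (by fun_prop)

lemma compl_mem_nhds_zero {d : ℕ} {A : Set (Fin d → ℝ)} (hA : IsRuinRegion A) :
    Aᶜ ∈ nhds (0 : Fin d → ℝ) := by
  have h := isClosed_closure.isOpen_compl.mem_nhds hA.2.2.2
  exact mem_of_superset h (compl_subset_compl.2 subset_closure)

lemma mem_smul_iff_lt_gauge {d : ℕ} {A : Set (Fin d → ℝ)} (hA : IsRuinRegion A) {u : ℝ} (hu : 0 < u)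
    (x : Fin d → ℝ) : x ∈ u • A ↔ u < gauge Aᶜ x := by
  have h1 := gauge_le_one_iff_mem_closure (x := u⁻¹ • x) hA.2.2.1 (compl_mem_nhds_zero hA)
  rw [hA.1.isClosed_compl.closure_eq, gauge_smul_of_nonneg (inv_nonneg.2 hu.le), smul_eq_mul,
    inv_mul_le_iff₀ hu, mul_one] at h1
  rw [mem_smul_set_iff_inv_smul_mem₀ hu.ne', ← not_iff_not, not_lt, h1, mem_compl_iff]

/-- A law on `[0,∞)` is determined by its tails at positive levels: the tail at `0` is recovered
by right-continuity. -/
lemma eq_map_of_tails {d : ℕ} (F : Measure (Fin d → ℝ)) [IsProbabilityMeasure F] (ν : Measure ℝ)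
    [IsProbabilityMeasure ν] {g : (Fin d → ℝ) → ℝ} (hg : Measurable g) (hg0 : ∀ x, 0 ≤ g x)
    (hν0 : ν (Iio 0) = 0) (hν : ∀ t : ℝ, 0 < t → ν (Ioi t) = F {x | t < g x}) :
    ν = F.map g := by
  have : IsProbabilityMeasure (F.map g) := Measure.isProbabilityMeasure_map hg.aemeasurable
  have hpos : ∀ t : ℝ, 0 < t → ν (Ioi t) = F.map g (Ioi t) := fun t ht => by
    rw [hν t ht, Measure.map_apply hg measurableSet_Ioi]; rfl
  have hIoi : ∀ t : ℝ, ν (Ioi t) = F.map g (Ioi t) := by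
    intro t
    rcases lt_trichotomy t 0 with ht | rfl | ht
    · have h1 : ν (Ioi t)ᶜ = 0 :=
        measure_mono_null (fun y hy => lt_of_le_of_lt (by simpa using hy) ht) hν0
      have h2 : F.map g (Ioi t) = 1 := by
        rw [Measure.map_apply hg measurableSet_Ioi,
          show g ⁻¹' Ioi t = univ from eq_univ_of_forall fun x => lt_of_lt_of_le ht (hg0 x),
          measure_univ]
      rw [h2, ← prob_compl_eq_zero_iff measurableSet_Ioi, h1]
    · have hU : Ioi (0 : ℝ) = ⋃ n : ℕ, Ioi (1 / ((n : ℝ) + 1)) := by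
        ext y
        simp only [mem_Ioi, mem_iUnion]
        exact ⟨fun hy => exists_nat_one_div_lt hy, fun ⟨n, hn⟩ => lt_trans (by positivity) hn⟩
      have hm : Monotone fun n : ℕ => Ioi (1 / ((n : ℝ) + 1)) := fun m n hmn =>
        Ioi_subset_Ioi (one_div_le_one_div_of_le (by positivity) (by gcongr))
      rw [hU, hm.measure_iUnion, hm.measure_iUnion]
      exact iSup_congr fun n => hpos _ (by positivity)
    · exact hpos t ht
  refine Measure.ext_of_Iic _ _ fun a => ?_
  rw [← compl_Ioi, prob_compl_eq_one_sub measurableSet_Ioi, prob_compl_eq_one_sub measurableSet_Ioi,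
    hIoi a]

/-- Conditioning on the last summand `x`: either `g x > u`, or `g` of the partial sum has to exceed
`u - g x ≥ 0`. -/
lemma convPow_succ_le {d : ℕ} (F : Measure (Fin d → ℝ)) [IsProbabilityMeasure F]
    {g : (Fin d → ℝ) → ℝ} (hg : Measurable g) (hadd : ∀ x y, g (x + y) ≤ g x + g y) (n : ℕ) (u : ℝ) :
    convPow F (n + 1) {x | u < g x} ≤
      (∫⁻ x in {x | g x ≤ u}, convPow F n {s | u - g x < g s} ∂F) + F {x | u < g x} := by
  have hS : MeasurableSet {x | g x ≤ u} := measurableSet_le hg measurable_const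
  have hlt : MeasurableSet {p : (Fin d → ℝ) × (Fin d → ℝ) | u < g p.1 + g p.2} :=
    measurableSet_lt measurable_const (by fun_prop)
  calc convPow F (n + 1) {x | u < g x}
      = ((convPow F n).prod F) {p | u < g (p.1 + p.2)} := by
        rw [convPow, Measure.map_apply (by fun_prop) (measurableSet_lt measurable_const hg)]; rfl
    _ ≤ ((convPow F n).prod F) {p | u < g p.1 + g p.2} :=
        measure_mono fun p hp => lt_of_lt_of_le hp (hadd _ _)
    _ = ∫⁻ x, convPow F n {s | u - g x < g s} ∂F := by
        rw [Measure.prod_apply_symm hlt]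
        simp only [preimage_ofPred_eq, sub_lt_iff_lt_add]
    _ = (∫⁻ x in {x | g x ≤ u}, convPow F n {s | u - g x < g s} ∂F)
          + ∫⁻ x in {x | g x ≤ u}ᶜ, convPow F n {s | u - g x < g s} ∂F :=
        (lintegral_add_compl _ hS).symm
    _ ≤ _ := by
        gcongr
        calc _ ≤ ∫⁻ x in {x | g x ≤ u}ᶜ, 1 ∂F := lintegral_mono fun x => prob_le_one
          _ = F {x | u < g x} := by
            rw [setLIntegral_one]; congr 1; ext x; simp

/-- The same decomposition for two independent copies of `g(X)`, where it is an identity since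
`g ≥ 0`. -/
lemma prod_tail_eq {d : ℕ} (F : Measure (Fin d → ℝ)) [IsProbabilityMeasure F]
    {g : (Fin d → ℝ) → ℝ} (hg : Measurable g) (hg0 : ∀ x, 0 ≤ g x) (u : ℝ) :
    (F.prod F) {p | u < g p.1 + g p.2} =
      (∫⁻ x in {x | g x ≤ u}, F {s | u - g x < g s} ∂F) + F {x | u < g x} := by
  have hS : MeasurableSet {x | g x ≤ u} := measurableSet_le hg measurable_const
  have hlt : MeasurableSet {p : (Fin d → ℝ) × (Fin d → ℝ) | u < g p.1 + g p.2} :=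
    measurableSet_lt measurable_const (by fun_prop)
  have h1 : (F.prod F) {p | u < g p.1 + g p.2} = ∫⁻ x, F {s | u - g x < g s} ∂F := by
    rw [Measure.prod_apply_symm hlt]
    simp only [preimage_ofPred_eq, sub_lt_iff_lt_add]
  have h2 : ∫⁻ x in {x | g x ≤ u}ᶜ, F {s | u - g x < g s} ∂F = F {x | u < g x} := by
    calc _ = ∫⁻ x in {x | g x ≤ u}ᶜ, 1 ∂F := by
          refine setLIntegral_congr_fun hS.compl fun x hx => ?_
          have hx' : u < g x := by simpa using hx
          have : {s | u - g x < g s} = univ :=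
            eq_univ_of_forall fun s => lt_of_lt_of_le (by linarith) (hg0 s)
          simp only [this, measure_univ]
      _ = F {x | u < g x} := by
          rw [setLIntegral_one]; congr 1; ext x; simp
  rw [h1, ← lintegral_add_compl _ hS, h2]

/-- Kesten's induction.  The constant `C` bounds the contribution of a large last summand together
with that of the levels `u < T`. -/
lemma convPow_tail_le {d : ℕ} (F : Measure (Fin d → ℝ)) [IsProbabilityMeasure F]
    {g : (Fin d → ℝ) → ℝ} (hg : Measurable g) (hg0 : ∀ x, 0 ≤ g x) (hgz : g 0 = 0)
    (hadd : ∀ x y, g (x + y) ≤ g x + g y) {ε C T : ℝ} (hε : 0 < ε) (hC : 1 ≤ C)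
    (hsmall : ∀ u < T, 1 ≤ ENNReal.ofReal C * F {x | u < g x})
    (hlarge : ∀ u ≥ T, (F.prod F) {p | u < g p.1 + g p.2} ≤
      ENNReal.ofReal (2 + ε) * F {x | u < g x}) (n : ℕ) :
    ∀ u : ℝ, 0 ≤ u → convPow F n {x | u < g x} ≤
      ENNReal.ofReal (C / ε * ((1 + ε) ^ n - 1)) * F {x | u < g x} := by
  induction n with
  | zero =>
    intro u hu
    have : convPow F 0 {x | u < g x} = 0 := by
      rw [convPow, Measure.dirac_apply' _ (measurableSet_lt measurable_const hg)]
      simp [hgz, hu]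
    rw [this]; exact zero_le
  | succ n ih =>
    intro u hu
    set a : ℝ := C / ε * ((1 + ε) ^ n - 1) with ha
    have hapos : 0 ≤ a :=
      mul_nonneg (by positivity) (sub_nonneg.2 (one_le_pow₀ (by linarith)))
    have hstep : C / ε * ((1 + ε) ^ (n + 1) - 1) = C + (1 + ε) * a := by
      rw [ha]; field_simp; ring
    rw [hstep]
    rcases lt_or_ge u T with hT | hT
    · calc _ ≤ 1 := prob_le_one
        _ ≤ ENNReal.ofReal C * F {x | u < g x} := hsmall u hT
        _ ≤ _ := by
          gcongr
          nlinarith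
    · have hI : ∫⁻ x in {x | g x ≤ u}, F {s | u - g x < g s} ∂F ≤
          ENNReal.ofReal (1 + ε) * F {x | u < g x} := by
        have h := hlarge u hT
        rw [prod_tail_eq F hg hg0, show 2 + ε = (1 + ε) + 1 by ring,
          ENNReal.ofReal_add (by linarith) zero_le_one, ENNReal.ofReal_one, add_mul, one_mul] at h
        exact (ENNReal.add_le_add_iff_right (measure_ne_top _ _)).1 h
      calc _ ≤ _ := convPow_succ_le F hg hadd n u
        _ ≤ (∫⁻ x in {x | g x ≤ u}, ENNReal.ofReal a * F {s | u - g x < g s} ∂F)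
              + F {x | u < g x} := by
            gcongr ?_ + _
            refine setLIntegral_mono' (measurableSet_le hg measurable_const) fun x hx => ?_
            exact ih _ (sub_nonneg.2 hx)
        _ = ENNReal.ofReal a * (∫⁻ x in {x | g x ≤ u}, F {s | u - g x < g s} ∂F)
              + F {x | u < g x} := by
            rw [lintegral_const_mul' _ _ ENNReal.ofReal_ne_top]
        _ ≤ ENNReal.ofReal a * (ENNReal.ofReal (1 + ε) * F {x | u < g x})
              + ENNReal.ofReal C * F {x | u < g x} := by
            gcongr
            exact le_mul_of_one_le_left (zero_le) (ENNReal.one_le_ofReal.2 hC)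
        _ = _ := by
            rw [← mul_assoc, ← ENNReal.ofReal_mul hapos, ← add_mul,
              ← ENNReal.ofReal_add (by positivity) (by linarith)]
            congr 2; ring

/-- Kesten-type bound: if `F ∈ 𝓢_A`, then for every `ε > 0` there is `K > 0` such that for
all `u > 0` and `n ≥ 1`, `P(X⁽¹⁾ + ⋯ + X⁽ⁿ⁾ ∈ uA) ≤ K (1 + ε)ⁿ P(X ∈ uA)`. -/
theorem memS_kesten_bound
    {d : ℕ} {A : Set (Fin d → ℝ)} (hA : IsRuinRegion A)
    (F : Measure (Fin d → ℝ)) [IsProbabilityMeasure F]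
    (hsupp : F {x : Fin d → ℝ | ∀ i, 0 ≤ x i}ᶜ = 0)
    (hFA : MemS F A) :
    ∀ ε : ℝ, 0 < ε → ∃ K : ℝ, 0 < K ∧ ∀ u : ℝ, 0 < u → ∀ n : ℕ, 1 ≤ n →
      (convPow F n (u • A)).toReal ≤ K * (1 + ε) ^ n * (F (u • A)).toReal := by
  intro ε hε
  obtain ⟨ν, hνp, hν0, hν, hpos, hlim⟩ := hFA
  have hnhds := compl_mem_nhds_zero hA
  set g : (Fin d → ℝ) → ℝ := gauge Aᶜ with hgdef
  have hg : Measurable g := (continuous_gauge hA.2.2.1 hnhds).measurable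
  have hg0 : ∀ x, 0 ≤ g x := gauge_nonneg
  have hadd : ∀ x y, g (x + y) ≤ g x + g y :=
    gauge_add_le hA.2.2.1 (absorbent_nhds_zero hnhds)
  have hmem : ∀ u : ℝ, 0 < u → u • A = {x | u < g x} := fun u hu =>
    Set.ext fun x => mem_smul_iff_lt_gauge hA hu x
  obtain rfl : ν = F.map g := eq_map_of_tails F ν hg hg0 hν0 fun t ht => by rw [hν t ht, hmem t ht]
  have htail : ∀ t, mtail (F.map g) t = (F {x | t < g x}).toReal := fun t => by
    rw [mtail, Measure.map_apply hg measurableSet_Ioi]; rfl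
  have htail2 : ∀ t, mtail (Measure.map (fun p : ℝ × ℝ => p.1 + p.2) ((F.map g).prod (F.map g))) t
      = ((F.prod F) {p | t < g p.1 + g p.2}).toReal := fun t => by
    rw [mtail, Measure.map_prod_map _ _ hg hg, Measure.map_map (by fun_prop) (by fun_prop),
      Measure.map_apply (by fun_prop) measurableSet_Ioi]
    rfl
  have hev := hlim.eventually_lt_const (show (2 : ℝ) < 2 + ε by linarith)
  obtain ⟨T, hT⟩ := eventually_atTop.1 hev
  have hpT := hpos T
  set C : ℝ := 1 + 1 / mtail (F.map g) T with hCdef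
  have hC : 1 ≤ C := le_add_of_nonneg_right (by positivity)
  have key := convPow_tail_le F hg hg0 gauge_zero hadd (C := C) (T := T) hε hC
    (fun u hu => by
      have h1 : mtail (F.map g) T ≤ (F {x | u < g x}).toReal := by
        rw [htail]
        exact ENNReal.toReal_mono (measure_ne_top _ _)
          (measure_mono fun x (hx : T < g x) => hu.trans hx)
      rw [← ENNReal.ofReal_toReal (measure_ne_top F {x | u < g x}),
        ← ENNReal.ofReal_mul (by linarith), ENNReal.one_le_ofReal]
      calc (1 : ℝ) = 1 / mtail (F.map g) T * mtail (F.map g) T := by field_simp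
        _ ≤ C * (F {x | u < g x}).toReal := by
          gcongr
          linarith)
    (fun u hu => by
      have h := hT u hu
      rw [div_lt_iff₀ (hpos u), htail, htail2] at h
      rw [← ENNReal.ofReal_toReal (measure_ne_top F {x | u < g x}),
        ← ENNReal.ofReal_mul (by linarith)]
      exact (ENNReal.le_ofReal_iff_toReal_le (measure_ne_top _ _) (by positivity)).2 h.le)
  refine ⟨C / ε, by positivity, fun u hu n _ => ?_⟩
  rw [hmem u hu]
  have hn : 0 ≤ C / ε * ((1 + ε) ^ n - 1) :=
    mul_nonneg (by positivity) (sub_nonneg.2 (one_le_pow₀ (by linarith)))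
  calc _ ≤ (ENNReal.ofReal (C / ε * ((1 + ε) ^ n - 1)) * F {x | u < g x}).toReal :=
        ENNReal.toReal_mono (ENNReal.mul_ne_top ENNReal.ofReal_ne_top (measure_ne_top _ _))
          (key n u hu.le)
    _ = C / ε * ((1 + ε) ^ n - 1) * (F {x | u < g x}).toReal := by
        rw [ENNReal.toReal_mul, ENNReal.toReal_ofReal hn]
    _ ≤ _ := by
        gcongr
        linarith
end

section
/- Let X₁ and X₂ be independent nonnegative random variables with distributions F and G respectively, where F is subexponential and P(X₂ > 0) > 0. Suppose there is a function a : (0,∞) → (0,∞) such that: (1) a(t) is nondecreasing and a(t) → ∞ as t → ∞; (2) t/a(t) is nondecreasing and t/a(t) → ∞ as t → ∞; (3) lim_{t→∞} ̅F(t − a(t))/̅F(t) = 1; (4) lim_{t→∞} ̅G(a(t))/P(X₁X₂ > t) = 0. Then lim_{t→∞} P(X₁X₂ > t − a(t))/P(X₁X₂ > t) = 1, and consequently lim_{t→∞} P(X₁X₂ > t + a(t))/P(X₁X₂ > t) = 1. -/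
/-!
Write `F̄`, `Ḡ`, `H̄` for the tails of `X₁`, `X₂`, `X₁X₂`. Conditioning on `X₂` gives
`H̄(t) = ∫ F̄(t / y) G(dy)` over `y > 0`, and `H̄(t - a t)` is compared with `H̄(t)` on three ranges
of `y` (`prod_tail_upper`).

* For `y > a t` the contribution is at most `Ḡ(a t)`, negligible by assumption.
* For `δ < y ≤ a t` put `s = t / y ≥ t / a t`, which is large. The monotonicity of `a` (if `y ≤ 1`)
  or of `t / a t` (if `y ≥ 1`) gives `a t / y ≤ K a s` with `K = max 1 (1 / δ)`. Since the
  insensitivity of `F̄` to shifts by `a` extends to shifts by `K a` (`tail_shift_mul`), the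
  integrand grows by a factor at most `1 + ε`.
* For `0 < y ≤ δ` the contribution is at most `P(0 < X₂ ≤ δ) F̄(t / y₀)` as soon as `2 δ ≤ y₀` and
  `2 a t ≤ t`. Fixing `y₀` with `Ḡ(y₀) > 0`, one has `H̄(t) ≥ F̄(t / y₀) Ḡ(y₀)`
  (`prod_tail_lower`), so this is a small multiple of `H̄(t)` once `δ` is small.

The statement for `t + a t` follows at the point `u = t + a t`, because `u - a u ≤ t`.
-/

open MeasureTheory ProbabilityTheory Filter Set

lemma mtail_nonneg (ν : Measure ℝ) (t : ℝ) : 0 ≤ mtail ν t := ENNReal.toReal_nonneg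

lemma mtail_anti (ν : Measure ℝ) [IsProbabilityMeasure ν] {s t : ℝ} (h : s ≤ t) :
    mtail ν t ≤ mtail ν s :=
  ENNReal.toReal_mono (measure_ne_top _ _) (measure_mono (Ioi_subset_Ioi h))

/-- Enlarging the shift: if `F̄(s - a s) ≤ (1 + ε) F̄(s)` eventually, then the same holds with
`a` replaced by any half-integer multiple of `a`. Each step shifts by a further `a s / 2`, which is
at most `a s'` at the already shifted point `s' ≥ s / 2`, because `s / a s` is nondecreasing. -/
lemma tail_shift_mul (F : Measure ℝ) [IsProbabilityMeasure F]
    (a : ℝ → ℝ) (hapos : ∀ t : ℝ, 0 < t → 0 < a t)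
    (ha2 : (∀ s t : ℝ, 0 < s → s ≤ t → s / a s ≤ t / a t) ∧
      Tendsto (fun t : ℝ => t / a t) atTop atTop)
    (h3 : ∀ ε : ℝ, 0 < ε → ∀ᶠ s in atTop, mtail F (s - a s) ≤ (1 + ε) * mtail F s)
    (n : ℕ) : ∀ ε : ℝ, 0 < ε →
      ∀ᶠ s in atTop, mtail F (s - n / 2 * a s) ≤ (1 + ε) * mtail F s := by
  induction n with
  | zero =>
    intro ε hε
    refine Eventually.of_forall fun s => ?_
    have := mtail_nonneg F s
    simp only [Nat.cast_zero, zero_div, zero_mul, sub_zero]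
    nlinarith
  | succ n ih =>
    intro ε hε
    obtain ⟨η, hη, hη1, hη2⟩ : ∃ η : ℝ, 0 < η ∧ η ≤ 1 ∧ 3 * η ≤ ε :=
      ⟨min 1 (ε / 3), by positivity, min_le_left _ _, by
        have := min_le_right 1 (ε / 3); linarith⟩
    obtain ⟨S, hS⟩ := eventually_atTop.1 (h3 η hη)
    filter_upwards [ih η hη, ha2.2.eventually_ge_atTop (n : ℝ), eventually_gt_atTop 0,
      eventually_ge_atTop (2 * S)] with s h1 h2 h0 hs
    have ha := hapos s h0
    have hna : n * a s ≤ s := (le_div_iff₀ ha).1 h2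
    obtain ⟨s', hs'⟩ : ∃ s' : ℝ, s' = s - n / 2 * a s := ⟨_, rfl⟩
    rw [← hs'] at h1
    have hle : s / 2 ≤ s' := by rw [hs']; linarith
    have hs'0 : 0 < s' := by linarith
    have ha' := hapos s' hs'0
    have hs's : s' ≤ s := by
      have : 0 ≤ (n : ℝ) / 2 * a s := by positivity
      linarith
    have hcmp : a s / 2 ≤ a s' := by
      have h := ha2.1 s' s hs'0 hs's
      rw [div_le_div_iff₀ ha' ha] at h
      have h5 : s / 2 * a s ≤ s * a s' := (mul_le_mul_of_nonneg_right hle ha.le).trans h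
      nlinarith
    have hm := mtail_nonneg F s
    calc mtail F (s - (n + 1 : ℕ) / 2 * a s) ≤ mtail F (s' - a s') := by
          apply mtail_anti
          push_cast
          linarith
      _ ≤ (1 + η) * mtail F s' := hS s' (by linarith)
      _ ≤ (1 + η) * ((1 + η) * mtail F s) := by gcongr
      _ ≤ (1 + ε) * mtail F s := by nlinarith [mul_nonneg hm (sub_nonneg.2 hη1)]

lemma exists_pos_tail (G : Measure ℝ) (hG : 0 < G (Ioi 0)) : ∃ y : ℝ, 0 < y ∧ 0 < G (Ioi y) := by
  by_contra! h
  have hU : Ioi (0 : ℝ) = ⋃ n : ℕ, Ioi (1 / ((n : ℝ) + 1)) := by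
    ext x
    simp only [mem_Ioi, mem_iUnion]
    exact ⟨fun hx => exists_nat_one_div_lt hx, fun ⟨n, hn⟩ => lt_trans (by positivity) hn⟩
  rw [hU, measure_iUnion_null fun n => le_antisymm (h _ (by positivity)) (zero_le)] at hG
  exact lt_irrefl _ hG

lemma exists_small_Ioc (G : Measure ℝ) [IsProbabilityMeasure G] (c y : ℝ) (hc : 0 < c)
    (hy : 0 < y) : ∃ δ : ℝ, 0 < δ ∧ δ ≤ y ∧ G (Ioc 0 δ) ≤ ENNReal.ofReal c := by
  have hT : Tendsto (fun n : ℕ => G (Ioc 0 (1 / ((n : ℝ) + 1)))) atTop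
      (nhds (G (⋂ n : ℕ, Ioc (0 : ℝ) (1 / ((n : ℝ) + 1))))) := by
    refine tendsto_measure_iInter_atTop (fun n => measurableSet_Ioc.nullMeasurableSet) ?_
      ⟨0, measure_ne_top _ _⟩
    intro m n hmn
    refine Ioc_subset_Ioc_right ?_
    have : (m : ℝ) ≤ n := by exact_mod_cast hmn
    exact one_div_le_one_div_of_le (by positivity) (by linarith)
  have hI : (⋂ n : ℕ, Ioc (0 : ℝ) (1 / ((n : ℝ) + 1))) = ∅ := by
    rw [eq_empty_iff_forall_notMem]
    intro x hx
    rw [mem_iInter] at hx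
    obtain ⟨n, hn⟩ := exists_nat_one_div_lt (hx 0).1
    exact absurd (hx n).2 (not_le.2 hn)
  rw [hI, measure_empty] at hT
  have h1 := hT.eventually_lt_const (ENNReal.ofReal_pos.2 hc)
  have h2 := (tendsto_one_div_add_atTop_nhds_zero_nat (𝕜 := ℝ)).eventually_lt_const hy
  obtain ⟨n, hn, hn2⟩ := (h1.and h2).exists
  exact ⟨_, by positivity, hn2.le, hn.le⟩

lemma prod_tail_eq_s18 (F G : Measure ℝ) [IsProbabilityMeasure F] [IsProbabilityMeasure G] (t : ℝ) :
    (Measure.map (fun p : ℝ × ℝ => p.1 * p.2) (F.prod G)) (Ioi t)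
      = ∫⁻ y, F {x | t < x * y} ∂G := by
  have hm : Measurable (fun p : ℝ × ℝ => p.1 * p.2) := by fun_prop
  rw [Measure.map_apply hm measurableSet_Ioi, Measure.prod_apply_symm (hm measurableSet_Ioi)]
  rfl

lemma setOf_lt_mul (t y : ℝ) (hy : 0 < y) : {x : ℝ | t < x * y} = Ioi (t / y) := by
  ext x
  simp [div_lt_iff₀ hy]

lemma prod_tail_lower (F G : Measure ℝ) [IsProbabilityMeasure F] [IsProbabilityMeasure G]
    (t y₀ : ℝ) (ht : 0 ≤ t) (hy : 0 < y₀) :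
    F (Ioi (t / y₀)) * G (Ioi y₀)
      ≤ (Measure.map (fun p : ℝ × ℝ => p.1 * p.2) (F.prod G)) (Ioi t) := by
  rw [prod_tail_eq_s18, ← setLIntegral_const]
  refine (setLIntegral_mono' measurableSet_Ioi fun y hyy => ?_).trans
    (setLIntegral_le_lintegral (Ioi y₀) _)
  rw [setOf_lt_mul t y (hy.trans hyy)]
  exact measure_mono (Ioi_subset_Ioi (div_le_div_of_nonneg_left ht hy (le_of_lt hyy)))

/-- The quantitative upper bound: conditioning on `X₂ = y`, the range `0 < y ≤ δ` costs at most
`P(X₂ ∈ (0, δ]) F̄(t / y₀)`, the range `δ < y ≤ a t` at most a factor `1 + ε` by `hmid`, and the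
range `y > a t` at most `Ḡ(a t)`. -/
lemma prod_tail_upper (F G : Measure ℝ) [IsProbabilityMeasure F] [IsProbabilityMeasure G]
    (hGsupp : G (Iio 0) = 0) (t b δ y₀ ε : ℝ) (hε : 0 ≤ ε) (hδ : 0 < δ) (hδy : 2 * δ ≤ y₀)
    (hb : 2 * b ≤ t) (hb0 : 0 < b)
    (hmid : ∀ y, δ < y → y ≤ b → mtail F ((t - b) / y) ≤ (1 + ε) * mtail F (t / y)) :
    (Measure.map (fun p : ℝ × ℝ => p.1 * p.2) (F.prod G)) (Ioi (t - b))
      ≤ ENNReal.ofReal (1 + ε) *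
          (Measure.map (fun p : ℝ × ℝ => p.1 * p.2) (F.prod G)) (Ioi t)
        + F (Ioi (t / y₀)) * G (Ioc 0 δ) + G (Ioi b) := by
  have hmeas : Measurable fun y => F {x | t < x * y} :=
    measurable_measure_prodMk_right (μ := F) (s := {p : ℝ × ℝ | t < p.1 * p.2})
      (measurableSet_lt (by fun_prop) (by fun_prop))
  have hpt : ∀ᵐ y ∂G, F {x | t - b < x * y} ≤ ENNReal.ofReal (1 + ε) * F {x | t < x * y}
      + (Ioc 0 δ).indicator (fun _ => F (Ioi (t / y₀))) y
      + (Ioi b).indicator (fun _ => 1) y := by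
    have hae : ∀ᵐ y ∂G, 0 ≤ y := by
      rw [ae_iff]; simpa [Iio] using hGsupp
    filter_upwards [hae] with y hy
    rcases hy.eq_or_lt with rfl | hy
    · have : {x : ℝ | t - b < x * 0} = ∅ := by
        ext x; simp; linarith
      rw [this, measure_empty]
      exact zero_le
    by_cases h1 : y ≤ δ
    · rw [indicator_of_mem (show y ∈ Ioc 0 δ from ⟨hy, h1⟩)]
      refine le_trans ?_ (le_self_add (a := _))
      refine le_trans ?_ le_add_self
      rw [setOf_lt_mul _ y hy]
      refine measure_mono (Ioi_subset_Ioi ?_)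
      -- `t / y₀ ≤ (t / 2) / δ ≤ (t - b) / y`
      rw [div_le_div_iff₀ (by linarith) hy]
      nlinarith
    by_cases h2 : y ≤ b
    · refine le_trans ?_ (le_self_add (a := _))
      refine le_trans ?_ (le_self_add (a := _))
      rw [setOf_lt_mul _ y hy, setOf_lt_mul _ y hy]
      have := hmid y (not_le.1 h1) h2
      rw [← ENNReal.ofReal_toReal (measure_ne_top F (Ioi ((t - b) / y))),
        ← ENNReal.ofReal_toReal (measure_ne_top F (Ioi (t / y))),
        ← ENNReal.ofReal_mul (by linarith)]
      exact ENNReal.ofReal_le_ofReal this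
    · rw [indicator_of_mem (show y ∈ Ioi b from not_le.1 h2)]
      exact prob_le_one.trans le_add_self
  rw [prod_tail_eq_s18, prod_tail_eq_s18]
  refine (lintegral_mono_ae hpt).trans (le_of_eq ?_)
  rw [lintegral_add_right _ (measurable_const.indicator measurableSet_Ioi),
    lintegral_add_right _ (measurable_const.indicator measurableSet_Ioc),
    lintegral_const_mul _ hmeas, lintegral_indicator_const measurableSet_Ioc,
    lintegral_indicator_const measurableSet_Ioi, one_mul]

lemma tendsto_one_of_le {f : ℝ → ℝ} (h1 : ∀ᶠ t in atTop, 1 ≤ f t)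
    (h2 : ∀ ε : ℝ, 0 < ε → ∀ᶠ t in atTop, f t ≤ 1 + ε) : Tendsto f atTop (nhds 1) := by
  rw [Metric.tendsto_nhds]
  intro ε hε
  filter_upwards [h1, h2 (ε / 2) (by positivity)] with t ht1 ht2
  rw [Real.dist_eq, abs_lt]
  constructor <;> linarith

/-- For independent nonnegative `X₁ ∼ F` (subexponential) and `X₂ ∼ G` with
`P(X₂ > 0) > 0`, under conditions (1)–(4) on the auxiliary function `a`, the tail of the
product `H = law(X₁X₂)` satisfies `P(X₁X₂ > t − a(t))/P(X₁X₂ > t) → 1`, and consequently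
`P(X₁X₂ > t + a(t))/P(X₁X₂ > t) → 1`. -/
theorem product_tail_insensitive
    (F G : Measure ℝ) [IsProbabilityMeasure F] [IsProbabilityMeasure G]
    (hFsupp : F (Set.Iio 0) = 0) (hGsupp : G (Set.Iio 0) = 0)
    (hF : IsSubexpMeasure F)
    (hG : 0 < G (Set.Ioi 0))
    (a : ℝ → ℝ) (hapos : ∀ t : ℝ, 0 < t → 0 < a t)
    (ha1 : (∀ s t : ℝ, 0 < s → s ≤ t → a s ≤ a t) ∧ Tendsto a atTop atTop)
    (ha2 : (∀ s t : ℝ, 0 < s → s ≤ t → s / a s ≤ t / a t) ∧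
      Tendsto (fun t : ℝ => t / a t) atTop atTop)
    (ha3 : Tendsto (fun t : ℝ => mtail F (t - a t) / mtail F t) atTop (nhds 1))
    (ha4 : Tendsto (fun t : ℝ =>
      mtail G (a t) /
        mtail (Measure.map (fun p : ℝ × ℝ => p.1 * p.2) (F.prod G)) t) atTop (nhds 0)) :
    Tendsto (fun t : ℝ =>
        mtail (Measure.map (fun p : ℝ × ℝ => p.1 * p.2) (F.prod G)) (t - a t) /
          mtail (Measure.map (fun p : ℝ × ℝ => p.1 * p.2) (F.prod G)) t) atTop (nhds 1) ∧
      Tendsto (fun t : ℝ =>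
        mtail (Measure.map (fun p : ℝ × ℝ => p.1 * p.2) (F.prod G)) (t + a t) /
          mtail (Measure.map (fun p : ℝ × ℝ => p.1 * p.2) (F.prod G)) t) atTop (nhds 1) := by
  set H := Measure.map (fun p : ℝ × ℝ => p.1 * p.2) (F.prod G) with hH
  have : IsProbabilityMeasure H := Measure.isProbabilityMeasure_map (by fun_prop)
  have hbig : ∀ c : ℝ, ∀ᶠ t in atTop, c * a t ≤ t := by
    intro c
    filter_upwards [ha2.2.eventually_ge_atTop c, eventually_gt_atTop 0] with t ht h0
    exact (le_div_iff₀ (hapos t h0)).1 ht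
  obtain ⟨y₀, hy₀, hGy₀⟩ := exists_pos_tail G hG
  have hgpos : 0 < mtail G y₀ := ENNReal.toReal_pos hGy₀.ne' (measure_ne_top _ _)
  have hlow : ∀ t, 0 ≤ t → mtail F (t / y₀) * mtail G y₀ ≤ mtail H t := by
    intro t ht
    rw [mtail, mtail, mtail, ← ENNReal.toReal_mul]
    exact ENNReal.toReal_mono (measure_ne_top _ _) (prod_tail_lower F G t y₀ ht hy₀)
  have hHpos : ∀ t, 0 ≤ t → 0 < mtail H t := fun t ht =>
    (mul_pos (hF.1 _) hgpos).trans_le (hlow t ht)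
  have h3 : ∀ ε : ℝ, 0 < ε → ∀ᶠ s in atTop, mtail F (s - a s) ≤ (1 + ε) * mtail F s := by
    intro ε hε
    filter_upwards [ha3.eventually_le_const (show (1 : ℝ) < 1 + ε by linarith)] with s hs
    exact (div_le_iff₀ (hF.1 s)).1 hs
  have key : ∀ ε : ℝ, 0 < ε → ∀ᶠ t in atTop, mtail H (t - a t) ≤ (1 + ε) * mtail H t := by
    intro ε hε
    have he : 0 < ε / 3 := by positivity
    obtain ⟨δ, hδ, hδy, hδG⟩ := exists_small_Ioc G (ε / 3 * mtail G y₀) (y₀ / 2)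
      (by positivity) (by positivity)
    -- `n / 2` dominates both `1` and `1 / δ`, so that `a t / y ≤ n / 2 * a (t / y)` for `y > δ`.
    obtain ⟨n, hn⟩ := exists_nat_ge (2 * max 1 (1 / δ))
    obtain ⟨S, hS⟩ := eventually_atTop.1 (tail_shift_mul F a hapos ha2 h3 n (ε / 3) he)
    filter_upwards [hbig 2, hbig S, eventually_gt_atTop 0, eventually_ge_atTop S,
      ha4.eventually_le_const he] with t ht2 htS h0 htS' h4
    have hat := hapos t h0
    have hmid : ∀ y, δ < y → y ≤ a t →
        mtail F ((t - a t) / y) ≤ (1 + ε / 3) * mtail F (t / y) := by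
      intro y hy1 hy2
      have hy : 0 < y := hδ.trans hy1
      have hs : 0 < t / y := div_pos h0 hy
      have has := hapos _ hs
      have hSs : S ≤ t / y := by
        rw [le_div_iff₀ hy]
        rcases le_total S 0 with h | h
        · nlinarith
        · exact (mul_le_mul_of_nonneg_left hy2 h).trans htS
      refine le_trans (mtail_anti F ?_) (hS (t / y) hSs)
      rw [sub_div]
      have hn2 : max 1 (1 / δ) ≤ (n : ℝ) / 2 := by linarith
      have : a t / y ≤ max 1 (1 / δ) * a (t / y) := by
        rcases le_total y 1 with hy' | hy'
        · have hts : t ≤ t / y := by rw [le_div_iff₀ hy]; nlinarith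
          have h := ha1.1 t (t / y) h0 hts
          calc a t / y = 1 / y * a t := by ring
            _ ≤ 1 / δ * a (t / y) :=
              mul_le_mul (one_div_le_one_div_of_le hδ hy1.le) h hat.le (by positivity)
            _ ≤ _ := by gcongr; exact le_max_right _ _
        · have hts : t / y ≤ t := div_le_self h0.le hy'
          have h := ha2.1 (t / y) t hs hts
          rw [div_le_div_iff₀ has hat] at h
          have h' : a t / y ≤ a (t / y) := by
            have e : t / y * a t = t * (a t / y) := by ring
            rw [e] at h
            exact le_of_mul_le_mul_left h h0
          calc a t / y ≤ 1 * a (t / y) := by rw [one_mul]; exact h'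
            _ ≤ _ := by gcongr; exact le_max_left _ _
      have := this.trans (mul_le_mul_of_nonneg_right hn2 has.le)
      linarith
    have hup := prod_tail_upper F G hGsupp t (a t) δ y₀ (ε / 3) he.le hδ (by linarith) ht2 hat hmid
    rw [← hH] at hup
    have hfin : ENNReal.ofReal (1 + ε / 3) * H (Ioi t) ≠ ⊤ :=
      ENNReal.mul_ne_top ENNReal.ofReal_ne_top (measure_ne_top _ _)
    have hfin2 : F (Ioi (t / y₀)) * G (Ioc 0 δ) ≠ ⊤ :=
      ENNReal.mul_ne_top (measure_ne_top _ _) (measure_ne_top _ _)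
    have hup' := ENNReal.toReal_mono
      (ENNReal.add_ne_top.2 ⟨ENNReal.add_ne_top.2 ⟨hfin, hfin2⟩, measure_ne_top _ _⟩) hup
    rw [ENNReal.toReal_add (ENNReal.add_ne_top.2 ⟨hfin, hfin2⟩) (measure_ne_top _ _),
      ENNReal.toReal_add hfin hfin2, ENNReal.toReal_mul, ENNReal.toReal_mul,
      ENNReal.toReal_ofReal (by positivity)] at hup'
    have hd : (G (Ioc 0 δ)).toReal ≤ ε / 3 * mtail G y₀ :=
      ENNReal.toReal_le_of_le_ofReal (by positivity) hδG
    have h4' : mtail G (a t) ≤ ε / 3 * mtail H t := (div_le_iff₀ (hHpos t h0.le)).1 h4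
    have h5 : mtail F (t / y₀) * (G (Ioc 0 δ)).toReal ≤ ε / 3 * mtail H t :=
      calc _ ≤ mtail F (t / y₀) * (ε / 3 * mtail G y₀) :=
            mul_le_mul_of_nonneg_left hd (mtail_nonneg _ _)
        _ = ε / 3 * (mtail F (t / y₀) * mtail G y₀) := by ring
        _ ≤ _ := mul_le_mul_of_nonneg_left (hlow t h0.le) he.le
    change mtail H (t - a t) ≤ (1 + ε / 3) * mtail H t
      + mtail F (t / y₀) * (G (Ioc 0 δ)).toReal + mtail G (a t) at hup'
    linarith
  constructor
  · refine tendsto_one_of_le ?_ fun ε hε => ?_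
    · filter_upwards [eventually_gt_atTop 0] with t h0
      rw [one_le_div (hHpos t h0.le)]
      exact mtail_anti H (by linarith [hapos t h0])
    · filter_upwards [key ε hε, eventually_gt_atTop 0] with t ht h0
      exact (div_le_iff₀ (hHpos t h0.le)).2 ht
  -- For the second limit put `u = t + a t`: monotonicity of `a` gives `u - a u ≤ t`.
  · have hinv : Tendsto (fun t => mtail H t / mtail H (t + a t)) atTop (nhds 1) := by
      refine tendsto_one_of_le ?_ fun ε hε => ?_
      · filter_upwards [eventually_gt_atTop 0] with t h0
        have hat := hapos t h0
        rw [one_le_div (hHpos _ (by linarith))]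
        exact mtail_anti H (by linarith)
      · have hu : Tendsto (fun t => t + a t) atTop atTop := tendsto_id.atTop_add_atTop ha1.2
        filter_upwards [hu.eventually (key ε hε), eventually_gt_atTop 0] with t ht h0
        have hat := hapos t h0
        rw [div_le_iff₀ (hHpos _ (by linarith))]
        refine le_trans (mtail_anti H ?_) ht
        linarith [ha1.1 t (t + a t) h0 (by linarith)]
    simpa using hinv.inv₀ one_ne_zero
end
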